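/- arXiv:1109.1079 — 2 statements merged into one kernel-verified Lean document; each statement's English description precedes it below -/
import Mathlib

section
/- Let k be an odd positive integer, p a prime, and s an integer with 0 ≤ 2s ≤ p. Set n = k(p² + p + 1) and r = ((k+1)/2)(p+1) + s. Then there exists a maximal intersecting family F of r-element subsets of [n] with ∪F = [n] such that all degrees are equal, i.e., d_F(x) = d_F(y) for all x, y ∈ [n]; in particular Δ(F) = δ(F), so the minimum possible degree ratio m(n, r) equals 1. -/
/-- The degree of `x` in the family `F`: the number of members of `F` containing `x`. -/
def degree (F : Finset (Finset ℕ)) (x : ℕ) : ℕ := (F.filter (fun A => x ∈ A)).card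

/-- `F` is an intersecting family: any two members have nonempty intersection. -/
def IsIntersecting (F : Finset (Finset ℕ)) : Prop :=
  ∀ A ∈ F, ∀ B ∈ F, (A ∩ B).Nonempty

/-- `F` is a family of `r`-element subsets of `[n] = {1,…,n}`. -/
def IsFamily (n r : ℕ) (F : Finset (Finset ℕ)) : Prop :=
  ∀ A ∈ F, A ⊆ Finset.Icc 1 n ∧ A.card = r

/-- `F` is a maximal intersecting family of `r`-subsets of `[n]`: it is intersecting and
every `r`-subset of `[n]` not in `F` is disjoint from some member of `F`. -/
def IsMaxIntersecting (n r : ℕ) (F : Finset (Finset ℕ)) : Prop :=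
  IsIntersecting F ∧
    ∀ G : Finset ℕ, G ⊆ Finset.Icc 1 n → G.card = r → G ∉ F → ∃ A ∈ F, A ∩ G = ∅

/-- `∪F = [n]`: every element of `[n]` lies in some member of `F`. -/
def Covers (n : ℕ) (F : Finset (Finset ℕ)) : Prop :=
  ∀ x ∈ Finset.Icc 1 n, ∃ A ∈ F, x ∈ A

/-- `Δ(F)`: the maximum degree over `x ∈ [n]`. -/
noncomputable def maxDeg (n : ℕ) (F : Finset (Finset ℕ)) : ℕ :=
  sSup (degree F '' Set.Icc 1 n)

/-- `δ(F)`: the minimum degree over `x ∈ [n]`. -/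
noncomputable def minDeg (n : ℕ) (F : Finset (Finset ℕ)) : ℕ :=
  sInf (degree F '' Set.Icc 1 n)


section Lacunary
open Polynomial

/-- Blokhuis' lacunary polynomial lemma, coprime form. -/
lemma lacunary_coprime {p : ℕ} [Fact p.Prime] (f g : (ZMod p)[X]) (hcop : IsCoprime f g)
    (hdeg : g.natDegree ≤ f.natDegree) (hf : f ≠ 0) (hm : 2 * f.natDegree < p)
    (hsp : (X ^ p * f + g).Splits) :
    (X * f + g = 0) ∨ ∃ a c : ZMod p, X ^ p * f + g = C c * (X - C a) ^ p := by
  classical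
  have hp : p.Prime := Fact.out
  set h := X ^ p * f + g with hh
  have hXf : (X ^ p * f).natDegree = p + f.natDegree := by
    rw [natDegree_mul (pow_ne_zero _ X_ne_zero) hf, natDegree_X_pow]
  have hhd : h.natDegree = p + f.natDegree := by
    rw [hh, natDegree_add_eq_left_of_natDegree_lt, hXf]
    rw [hXf]; have := hp.pos; omega
  have hh0 : h ≠ 0 := by
    intro h0; rw [h0] at hhd; simp at hhd; have := hp.pos; omega
  by_cases hA : X * f + g = 0
  · exact Or.inl hA
  right
  have hW : derivative f * g - f * derivative g = 0 := by
    by_contra hW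
    have hAW := mul_ne_zero hA hW
    have hdvd : h ∣ (X * f + g) * (derivative f * g - f * derivative g) := by
      apply hsp.dvd_of_roots_le_roots hh0
      rw [Multiset.le_iff_count]
      intro a
      rw [count_roots, count_roots]
      by_cases ha : h.IsRoot a
      · have hpos := (rootMultiplicity_pos hh0).2 ha
        rw [le_rootMultiplicity_iff hAW]
        have h1 : X - C a ∣ X * f + g := by
          rw [dvd_iff_isRoot]
          simpa [hh, IsRoot.def] using ha
        have h2 : (X - C a) ^ (h.rootMultiplicity a - 1) ∣
            derivative f * g - f * derivative g := by
          have e : derivative f * g - f * derivative g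
              = derivative f * h - f * derivative h := by
            simp [hh, derivative_mul, derivative_X_pow]
            ring
          rw [e]
          apply dvd_sub
          · apply Dvd.dvd.mul_left
            exact (pow_dvd_pow _ (Nat.sub_le _ _)).trans (pow_rootMultiplicity_dvd h a)
          · apply Dvd.dvd.mul_left
            exact pow_sub_one_dvd_derivative_of_pow_dvd (pow_rootMultiplicity_dvd h a)
        have := mul_dvd_mul h1 h2
        rwa [← pow_succ', Nat.sub_add_cancel hpos] at this
      · rw [rootMultiplicity_eq_zero ha]; exact Nat.zero_le _
    have hle := natDegree_le_of_dvd hdvd hAW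
    rw [hhd, natDegree_mul hA hW] at hle
    have d1 : (X * f + g).natDegree ≤ f.natDegree + 1 := by
      refine (natDegree_add_le _ _).trans (max_le ?_ (by omega))
      refine natDegree_mul_le.trans ?_
      rw [natDegree_X]; omega
    have d2 : (derivative f * g - f * derivative g).natDegree ≤ 2 * f.natDegree := by
      refine (natDegree_sub_le _ _).trans (max_le ?_ ?_)
      · refine natDegree_mul_le.trans ?_
        have := natDegree_derivative_le f; omega
      · refine natDegree_mul_le.trans ?_
        have := natDegree_derivative_le g; omega
    have d3 : f.natDegree ≠ 0 → (derivative f * g - f * derivative g).natDegree + 1 ≤ 2 * f.natDegree := by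
      intro hf0
      have : (derivative f * g - f * derivative g).natDegree ≤ 2 * f.natDegree - 1 := by
        refine (natDegree_sub_le _ _).trans (max_le ?_ ?_)
        · refine natDegree_mul_le.trans ?_
          have := natDegree_derivative_le f; omega
        · refine natDegree_mul_le.trans ?_
          have := natDegree_derivative_le g; omega
      omega
    have := hp.two_le
    by_cases h0 : f.natDegree = 0 <;> [skip; specialize d3 h0] <;> omega
  have hfd : derivative f = 0 := by
    have : f ∣ derivative f := by
      apply hcop.dvd_of_dvd_mul_right
      exact ⟨derivative g, by linear_combination hW⟩
    by_contra hne
    have hl := natDegree_le_of_dvd this hne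
    by_cases h0 : f.natDegree = 0
    · rw [eq_C_of_natDegree_eq_zero h0] at hne; simp at hne
    · have := natDegree_derivative_lt h0; omega
  have hf0 : f.natDegree = 0 := by
    by_contra h0
    have h1 : (derivative f).coeff (f.natDegree - 1) = 0 := by rw [hfd]; simp
    rw [coeff_derivative, Nat.sub_add_cancel (Nat.pos_of_ne_zero h0)] at h1
    rcases mul_eq_zero.1 h1 with h2 | h2
    · exact hf (leadingCoeff_eq_zero.1 h2)
    · have h3 : ((f.natDegree : ℕ) : ZMod p) = 0 := by
        rw [← h2]; norm_cast; rw [Nat.sub_add_cancel (Nat.pos_of_ne_zero h0)]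
      rw [ZMod.natCast_eq_zero_iff] at h3
      have := Nat.le_of_dvd (Nat.pos_of_ne_zero h0) h3
      omega
  have hfc := eq_C_of_natDegree_eq_zero hf0
  have hgc := eq_C_of_natDegree_eq_zero (p := g) (by omega)
  set c := f.coeff 0
  set e := g.coeff 0
  have hc : c ≠ 0 := by
    intro hc; rw [hc] at hfc; simp at hfc; exact hf hfc
  refine ⟨-(e / c), c, ?_⟩
  rw [hh, hfc, hgc, C_neg, sub_neg_eq_add, add_pow_char, ← C_pow, ZMod.pow_card, mul_add, ← C_mul,
    mul_div_cancel₀ _ hc]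
  ring

lemma lacunary {p : ℕ} [Fact p.Prime] (m : ℕ) (f g h : (ZMod p)[X])
    (hh : h = X ^ p * f + g) (hhm : h.Monic) (hsp : h.Splits) (hhd : h.natDegree = p + m)
    (hfd : f.natDegree ≤ m) (hgd : g.natDegree ≤ m) (hm : 2 * m < p) :
    (∀ a, h.eval a = 0) ∨ ∃ a, (X - C a) ^ p ∣ h := by
  classical
  have hp : p.Prime := Fact.out
  have hf : f ≠ 0 := by
    rintro rfl
    simp at hh; subst hh; have := hp.pos; omega
  have hfd' : f.natDegree = m := by
    have : (X ^ p * f).natDegree = p + f.natDegree := by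
      rw [natDegree_mul (pow_ne_zero _ X_ne_zero) hf, natDegree_X_pow]
    have h2 := natDegree_add_le (X ^ p * f) g
    rw [← hh, hhd, this] at h2
    have := hp.pos
    rcases le_max_iff.1 h2 with h3 | h3 <;> omega
  obtain ⟨d, hd⟩ : ∃ d, d = EuclideanDomain.gcd f g := ⟨_, rfl⟩
  have hd0 : d ≠ 0 := by
    rw [hd]; intro h0; exact hf (EuclideanDomain.gcd_eq_zero_iff.1 h0).1
  obtain ⟨f0, hf0⟩ : d ∣ f := hd ▸ EuclideanDomain.gcd_dvd_left f g
  obtain ⟨g0, hg0⟩ : d ∣ g := hd ▸ EuclideanDomain.gcd_dvd_right f g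
  have hcop : IsCoprime f0 g0 := by
    have := EuclideanDomain.gcd_eq_gcd_ab f g
    rw [← hd] at this
    refine ⟨EuclideanDomain.gcdA f g, EuclideanDomain.gcdB f g, ?_⟩
    apply mul_left_cancel₀ hd0
    rw [mul_one]
    conv_rhs => rw [this]
    conv_rhs => enter [1,1]; rw [hf0]
    conv_rhs => enter [2,1]; rw [hg0]
    ring
  have hf00 : f0 ≠ 0 := by rintro rfl; simp at hf0; exact hf hf0
  have hhe : h = d * (X ^ p * f0 + g0) := by
    rw [hh]; conv_lhs => rw [hf0, hg0]
    ring
  have e1 : d.natDegree + f0.natDegree = m := by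
    rw [← hfd', ← natDegree_mul hd0 hf00, ← hf0]
  have e2 : g0.natDegree ≤ f0.natDegree := by
    by_cases hg00 : g0 = 0
    · simp [hg00]
    · have : d.natDegree + g0.natDegree = g.natDegree := by
        rw [← natDegree_mul hd0 hg00, ← hg0]
      omega
  have hs0 : (X ^ p * f0 + g0).Splits :=
    hsp.of_dvd hhm.ne_zero ⟨d, by rw [hhe, mul_comm]⟩
  rcases lacunary_coprime f0 g0 hcop e2 hf00 (by omega) hs0 with h1 | ⟨a, c, h1⟩
  · left
    intro a
    have := congrArg (eval a) h1
    simp at this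
    rw [hhe]
    simp [this]
  · right
    refine ⟨a, ?_⟩
    rw [hhe, h1]
    exact ⟨d * C c, by ring⟩

end Lacunary

section Affine
open MvPolynomial

/-- Jamison's theorem in `AG(2,p)`. -/
lemma jamison {p : ℕ} [Fact p.Prime] (U : Finset (ZMod p × ZMod p))
    (h1 : ∀ x y, ∃ u ∈ U, u.2 = y * u.1 + x) (h2 : ∀ a, ∃ u ∈ U, u.1 = a) :
    2 * p - 1 ≤ U.card := by
  classical
  have hp : p.Prime := Fact.out
  by_contra hlt
  obtain ⟨u0, hu0, -⟩ := h1 0 0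
  let lin : ZMod p × ZMod p → MvPolynomial (Fin 2) (ZMod p) := fun u =>
    1 - C (u.1 - u0.1) * X 0 - C (u.2 - u0.2) * X 1
  let Q : MvPolynomial (Fin 2) (ZMod p) := ∏ u ∈ U.erase u0, lin u
  have hlin : ∀ u, (lin u).totalDegree ≤ 1 := by
    intro u
    refine (totalDegree_sub _ _).trans (max_le ((totalDegree_sub _ _).trans (max_le ?_ ?_)) ?_)
    · simp
    · refine (totalDegree_mul _ _).trans ?_
      rw [totalDegree_C, totalDegree_X]
    · refine (totalDegree_mul _ _).trans ?_
      rw [totalDegree_C, totalDegree_X]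
  have hQ : Q.totalDegree ≤ U.card - 1 := by
    refine (totalDegree_finsetProd _ _).trans ?_
    refine (Finset.sum_le_sum (fun u _ => hlin u)).trans ?_
    simp [Finset.card_erase_of_mem hu0]
  have hcp : 0 < U.card := Finset.card_pos.2 ⟨u0, hu0⟩
  have hsum := MvPolynomial.sum_eval_eq_zero (K := ZMod p) Q (by
    rw [ZMod.card, Fintype.card_fin]; have := hp.two_le; omega)
  rw [Finset.sum_eq_single (0 : Fin 2 → ZMod p)] at hsum
  · simp [Q, lin] at hsum
  · intro z _ hz
    simp only [Q, eval_prod]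
    have key : ∃ u ∈ U, (u.1 - u0.1) * z 0 + (u.2 - u0.2) * z 1 = 1 := by
      by_cases hz1 : z 1 = 0
      · have hz0 : z 0 ≠ 0 := by
          intro h0; apply hz; ext i; fin_cases i <;> simp [h0, hz1]
        obtain ⟨u, hu, e⟩ := h2 (u0.1 + 1 / z 0)
        refine ⟨u, hu, ?_⟩
        rw [e, hz1]; field_simp; ring
      · obtain ⟨u, hu, e⟩ := h1 ((1 + u0.1 * z 0 + u0.2 * z 1) / z 1) (- z 0 / z 1)
        refine ⟨u, hu, ?_⟩
        rw [e]; field_simp; ring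
    obtain ⟨u, hu, e⟩ := key
    apply Finset.prod_eq_zero (i := u)
    · refine Finset.mem_erase.2 ⟨?_, hu⟩
      rintro rfl
      simp at e
    · simp [lin]
      linear_combination -e
  · simp

/-- Substitution `X₀ ↦ T X`, `X₁ ↦ T`, used to extract top homogeneous parts. -/
noncomputable def topHom (p : ℕ) :
    MvPolynomial (Fin 2) (ZMod p) →+* Polynomial (Polynomial (ZMod p)) :=
  eval₂Hom (Polynomial.C.comp Polynomial.C)
    ![Polynomial.X * Polynomial.C Polynomial.X, Polynomial.X]

lemma topHom_monomial {p : ℕ} (s : Fin 2 →₀ ℕ) (c : ZMod p) :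
    topHom p (monomial s c) =
      Polynomial.monomial (s 0 + s 1) (Polynomial.monomial (s 0) c) := by
  rw [topHom, eval₂Hom_monomial, Finsupp.prod_fintype _ _ (by simp)]
  simp only [Fin.prod_univ_two, Matrix.cons_val_zero, Matrix.cons_val_one, RingHom.comp_apply]
  rw [← Polynomial.C_mul_X_pow_eq_monomial, ← Polynomial.C_mul_X_pow_eq_monomial]
  simp only [Polynomial.C_mul, Polynomial.C_pow]
  ring

lemma topHom_coeff_natDegree {p : ℕ} (P : MvPolynomial (Fin 2) (ZMod p)) (d : ℕ) :
    ((topHom p P).coeff d).natDegree ≤ d := by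
  rw [P.as_sum, map_sum, Polynomial.finsetSum_coeff]
  apply Polynomial.natDegree_sum_le_of_forall_le
  intro s _
  rw [topHom_monomial, Polynomial.coeff_monomial]
  split_ifs with h
  · refine (Polynomial.natDegree_monomial_le _).trans (by omega)
  · simp

lemma topHom_coeff_eq_zero {p : ℕ} (P : MvPolynomial (Fin 2) (ZMod p)) (d : ℕ)
    (h : P.totalDegree < d) : (topHom p P).coeff d = 0 := by
  rw [P.as_sum, map_sum, Polynomial.finsetSum_coeff]
  apply Finset.sum_eq_zero
  intro s hs
  rw [topHom_monomial, Polynomial.coeff_monomial, if_neg]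
  have := le_totalDegree hs
  rw [Finsupp.sum_fintype _ _ (by simp)] at this
  simp only [Fin.sum_univ_two] at this
  omega

lemma prod_X_sub_C_mv {p : ℕ} [Fact p.Prime] (i : Fin 2) :
    ∏ r : ZMod p, ((X i : MvPolynomial (Fin 2) (ZMod p)) - C r) = X i ^ p - X i := by
  have h := FiniteField.X_pow_card_sub_X_natDegree_eq (ZMod p) (Fact.out : p.Prime).one_lt
  have e : ∏ r : ZMod p, (Polynomial.X - Polynomial.C r) =
      (Polynomial.X ^ p - Polynomial.X : Polynomial (ZMod p)) := by
    have hr := FiniteField.roots_X_pow_card_sub_X (ZMod p)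
    rw [ZMod.card] at hr
    have hs : (Polynomial.X ^ p - Polynomial.X : Polynomial (ZMod p)).Splits := by
      rw [Polynomial.splits_iff_card_roots, hr, h]
      simp [ZMod.card]
    have hmon : (Polynomial.X ^ p - Polynomial.X : Polynomial (ZMod p)).Monic := by
      apply Polynomial.monic_X_pow_sub
      rw [Polynomial.degree_X]
      exact_mod_cast (Fact.out : p.Prime).one_lt
    have := hs.eq_prod_roots_of_monic hmon
    rw [hr] at this
    exact this.symm
  have := congrArg (Polynomial.aeval (X i : MvPolynomial (Fin 2) (ZMod p))) e
  simpa [map_prod, algebraMap_eq] using this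

lemma redei {p : ℕ} [Fact p.Prime] (m : ℕ) (U : Finset (ZMod p × ZMod p))
    (hU : U.card = p + m)
    (h1 : ∀ x y, ∃ u ∈ U, u.2 = y * u.1 + x) :
    ∃ f g : Polynomial (ZMod p), f.natDegree ≤ m ∧ g.natDegree ≤ m ∧
      ∏ u ∈ U, (Polynomial.X + Polynomial.C u.1) = Polynomial.X ^ p * f + g := by
  classical
  have hp : p.Prime := Fact.out
  let lin : ZMod p × ZMod p → MvPolynomial (Fin 2) (ZMod p) := fun u =>
    X 0 + C u.1 * X 1 - C u.2
  let H : MvPolynomial (Fin 2) (ZMod p) := ∏ u ∈ U, lin u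
  have hlin : ∀ u, (lin u).totalDegree ≤ 1 := by
    intro u
    refine (totalDegree_sub _ _).trans (max_le ((totalDegree_add _ _).trans (max_le ?_ ?_)) ?_)
    · simp
    · refine (totalDegree_mul _ _).trans ?_
      simp
    · simp
  have hH : H.totalDegree ≤ p + m := by
    refine (totalDegree_finsetProd _ _).trans ?_
    refine (Finset.sum_le_sum (fun u _ => hlin u)).trans ?_
    simp [hU]
  obtain ⟨q, hq1, hq2⟩ := combinatorial_nullstellensatz_exists_linearCombination
    (R := ZMod p) (σ := Fin 2) (fun _ => Finset.univ) (fun _ => ⟨0, Finset.mem_univ _⟩) H (by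
      intro z _
      obtain ⟨u, hu, e⟩ := h1 (z 0) (z 1)
      simp only [H, eval_prod]
      apply Finset.prod_eq_zero hu
      simp [lin]
      linear_combination -e)
  simp only [prod_X_sub_C_mv] at hq1 hq2
  have hX : ∀ i : Fin 2, (X i ^ p - X i : MvPolynomial (Fin 2) (ZMod p)).totalDegree = p := by
    intro i
    rw [sub_eq_add_neg, totalDegree_add_eq_left_of_totalDegree_lt]
    · simp
    · simp [hp.one_lt]
  have hqd : ∀ i, (q i).totalDegree ≤ m := by
    intro i
    by_cases h0 : q i = 0
    · simp [h0]
    · have := (hq1 i).trans hH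
      rw [totalDegree_mul_of_isDomain _ h0, hX] at this
      · omega
      · intro h; have := hX i; rw [h] at this; simp at this; exact hp.ne_zero this.symm
  rw [Finsupp.linearCombination_apply, Finsupp.sum_fintype _ _ (by simp)] at hq2
  simp only [Fin.sum_univ_two, smul_eq_mul] at hq2
  refine ⟨(topHom p (q 0)).coeff m, (topHom p (q 1)).coeff m, topHom_coeff_natDegree _ _,
    topHom_coeff_natDegree _ _, ?_⟩
  have h3 := congrArg (fun P => (topHom p P).coeff (p + m)) hq2
  have hL : (topHom p H).coeff (p + m) = ∏ u ∈ U, (Polynomial.X + Polynomial.C u.1) := by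
    have e : topHom p H = ∏ u ∈ U, (Polynomial.C (Polynomial.X + Polynomial.C u.1) * Polynomial.X
        - Polynomial.C (Polynomial.C u.2)) := by
      simp only [H, map_prod]
      apply Finset.prod_congr rfl
      intro u _
      simp [lin, topHom]
      ring
    have := Polynomial.coeff_prod_of_natDegree_le (s := U)
      (fun u : ZMod p × ZMod p => (Polynomial.C (Polynomial.X + Polynomial.C u.1) * Polynomial.X
        - Polynomial.C (Polynomial.C u.2))) 1 (by
          intro u _
          refine (Polynomial.natDegree_sub_le _ _).trans (max_le ?_ ?_)
          · exact (Polynomial.natDegree_C_mul_le _ _).trans Polynomial.natDegree_X_le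
          · rw [Polynomial.natDegree_C]; omega)
    rw [mul_one, hU, ← e] at this
    rw [this]
    apply Finset.prod_congr rfl
    intro u _
    rw [Polynomial.coeff_sub, Polynomial.coeff_C_mul_X]
    rw [Polynomial.coeff_C]; simp
  have hz : ∀ i, (topHom p (q i)).coeff (p + m - 1) = 0 := by
    intro i
    apply topHom_coeff_eq_zero
    have := hqd i
    have := hp.two_le
    omega
  simp only [hL] at h3
  have hpm : p + m = (p + m - 1) + 1 := by have := hp.two_le; omega
  have t0 : topHom p (X 0) = Polynomial.X * Polynomial.C Polynomial.X := by simp [topHom]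
  have t1 : topHom p (X 1) = Polynomial.X := by simp [topHom]
  rw [h3, map_add, map_mul, map_mul, map_sub, map_sub, map_pow, map_pow, t0, t1, mul_sub, mul_sub,
    Polynomial.coeff_add, Polynomial.coeff_sub, Polynomial.coeff_sub]
  have c1 : (topHom p (q 0) * (Polynomial.X * Polynomial.C Polynomial.X)).coeff (p + m) = 0 := by
    rw [← mul_assoc, Polynomial.coeff_mul_C, hpm, Polynomial.coeff_mul_X, hz, zero_mul]
  have c2 : (topHom p (q 1) * Polynomial.X).coeff (p + m) = 0 := by
    rw [hpm, Polynomial.coeff_mul_X, hz]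
  have c3 : (topHom p (q 0) * (Polynomial.X * Polynomial.C Polynomial.X) ^ p).coeff (p + m) =
      (topHom p (q 0)).coeff m * Polynomial.X ^ p := by
    rw [mul_pow, ← mul_assoc, ← Polynomial.C_pow, Polynomial.coeff_mul_C, add_comm p m,
      Polynomial.coeff_mul_X_pow]
  have c4 : (topHom p (q 1) * Polynomial.X ^ p).coeff (p + m) = (topHom p (q 1)).coeff m := by
    rw [add_comm p m, Polynomial.coeff_mul_X_pow]
  rw [c1, c2, c3, c4]
  ring

lemma affine_blocking {p : ℕ} [Fact p.Prime] (U : Finset (ZMod p × ZMod p))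
    (hU : 2 * U.card < 3 * p) (hU' : U.card + 2 ≤ 2 * p)
    (h1 : ∀ x y, ∃ u ∈ U, u.2 = y * u.1 + x) :
    ∃ a, ∀ b, (a, b) ∈ U := by
  classical
  have hp : p.Prime := Fact.out
  have hge : p ≤ U.card := by
    have : (Finset.univ : Finset (ZMod p)) ⊆ U.image Prod.snd := by
      intro x _
      obtain ⟨u, hu, e⟩ := h1 x 0
      exact Finset.mem_image.2 ⟨u, hu, by simpa using e⟩
    have := (Finset.card_le_card this).trans Finset.card_image_le
    simpa [ZMod.card] using this
  obtain ⟨m, hm⟩ := Nat.exists_eq_add_of_le hge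
  obtain ⟨f, g, hf, hg, e⟩ := redei m U hm h1
  rcases lacunary m f g _ e (Polynomial.monic_prod_of_monic _ _
      fun u _ => Polynomial.monic_X_add_C u.1) (Polynomial.Splits.prod
      fun u _ => Polynomial.Splits.X_add_C u.1) (by
        rw [Polynomial.natDegree_prod_of_monic _ _ fun u _ => Polynomial.monic_X_add_C u.1]
        simp [hm]) hf hg (by omega) with h | ⟨a, h⟩
  · exfalso
    have := jamison U h1 (by
      intro a
      have := h (-a)
      rw [Polynomial.eval_prod, Finset.prod_eq_zero_iff] at this
      obtain ⟨u, hu, e⟩ := this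
      refine ⟨u, hu, ?_⟩
      simp at e
      linear_combination e)
    omega
  · refine ⟨-a, ?_⟩
    have hne : ∏ u ∈ U, (Polynomial.X + Polynomial.C u.1) ≠ 0 :=
      (Polynomial.monic_prod_of_monic _ _ fun u _ => Polynomial.monic_X_add_C u.1).ne_zero
    have hc := (Polynomial.le_rootMultiplicity_iff hne).2 h
    rw [← Polynomial.count_roots, Polynomial.roots_prod _ _ hne] at hc
    simp only [Polynomial.roots_X_add_C] at hc
    rw [Multiset.count_bind] at hc
    have hc' : p ≤ (U.filter (fun u => u.1 = -a)).card := by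
      refine hc.trans (le_of_eq ?_)
      rw [Finset.card_filter]
      apply Finset.sum_congr rfl
      intro u _
      rw [Multiset.count_singleton]
      congr 1
      rw [eq_iff_iff]
      constructor
      · intro h; rw [h]; simp
      · intro h; rw [h]; simp
    intro b
    have himg : (U.filter (fun u => u.1 = -a)).image Prod.snd = Finset.univ := by
      apply Finset.eq_univ_of_card
      rw [Finset.card_image_of_injOn, ZMod.card]
      · apply le_antisymm _ hc'
        have : (U.filter (fun u => u.1 = -a)).card ≤
            (Finset.univ : Finset (ZMod p)).card := by
          apply Finset.card_le_card_of_injOn Prod.snd (fun _ _ => Finset.mem_coe.2 (Finset.mem_univ _))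
          intro u hu v hv e
          simp at hu hv
          exact Prod.ext (hu.2.trans hv.2.symm) e
        simpa [ZMod.card] using this
      · intro u hu v hv e
        simp at hu hv
        exact Prod.ext (hu.2.trans hv.2.symm) e
    have hb : b ∈ (U.filter (fun u => u.1 = -a)).image Prod.snd := by
      rw [himg]; exact Finset.mem_univ _
    obtain ⟨u, hu, rfl⟩ := Finset.mem_image.1 hb
    simp at hu
    rw [← hu.2]; exact hu.1

end Affine

section Proj
open scoped LinearAlgebra.Projectivization

lemma exists_adapted_basis {K V : Type*} [Field K] [AddCommGroup V] [Module K V]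
    (hV : Module.finrank K V = 3) (f : V →ₗ[K] K) (hf : f ≠ 0) (v0 : V) (hv0 : v0 ≠ 0)
    (hfv : f v0 = 0) :
    ∃ b : Module.Basis (Fin 3) K V, b.coord 0 = f ∧ b 2 = v0 := by
  have : FiniteDimensional K V := Module.finite_of_finrank_pos (by omega)
  obtain ⟨u', hu'⟩ : ∃ u, f u ≠ 0 := by
    by_contra h; push Not at h; exact hf (LinearMap.ext h)
  obtain ⟨u, hu⟩ : ∃ u, f u = 1 := ⟨(f u')⁻¹ • u', by simp [hu']⟩
  obtain ⟨v1, hv1, hv1'⟩ : ∃ v1, f v1 = 0 ∧ v1 ∉ Submodule.span K {v0} := by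
    by_contra h
    push Not at h
    have hle : LinearMap.ker f ≤ Submodule.span K {v0} := fun x hx => h x hx
    have h1 := Submodule.finrank_mono hle
    rw [finrank_span_singleton hv0] at h1
    have h2 := LinearMap.finrank_range_add_finrank_ker f
    have h3 : Module.finrank K (LinearMap.range f) ≤ 1 := by
      simpa using Submodule.finrank_le (LinearMap.range f)
    omega
  have hli : LinearIndependent K ![u, v1, v0] := by
    rw [Fintype.linearIndependent_iff]
    intro c hc
    simp [Fin.sum_univ_three] at hc
    have c0 : c 0 = 0 := by simpa [hu, hv1, hfv] using congrArg f hc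
    have c1 : c 1 = 0 := by
      by_contra hne
      apply hv1'
      rw [Submodule.mem_span_singleton]
      refine ⟨-(c 1)⁻¹ * c 2, ?_⟩
      rw [c0, zero_smul, zero_add] at hc
      have : v1 = (c 1)⁻¹ • (c 1 • v1) := by rw [smul_smul, inv_mul_cancel₀ hne, one_smul]
      rw [this, eq_neg_of_add_eq_zero_left hc, mul_smul]
      simp
    have c2 : c 2 = 0 := by
      simpa [c0, c1, hv0] using hc
    intro i; fin_cases i <;> assumption
  let b := basisOfLinearIndependentOfCardEqFinrank hli (by simp [hV])
  have hb : ⇑b = ![u, v1, v0] := coe_basisOfLinearIndependentOfCardEqFinrank _ _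
  refine ⟨b, ?_, by rw [hb]; rfl⟩
  apply b.ext
  intro i
  rw [Module.Basis.coord_apply, Module.Basis.repr_self]
  fin_cases i <;> simp [hb, hu, hv1, hfv]

lemma projective_blocking {p : ℕ} [Fact p.Prime] {V : Type*} [AddCommGroup V] [Module (ZMod p) V]
    (hV : Module.finrank (ZMod p) V = 3) (M : Finset (ℙ (ZMod p) V))
    (hM : 2 * M.card ≤ 3 * p + 1) (hM' : M.card + 1 ≤ 2 * p)
    (hblock : ∀ f : V →ₗ[ZMod p] ZMod p, f ≠ 0 → ∃ P ∈ M, f P.rep = 0) :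
    ∃ f : V →ₗ[ZMod p] ZMod p, f ≠ 0 ∧ ∀ P : ℙ (ZMod p) V, f P.rep = 0 → P ∈ M := by
  classical
  have : FiniteDimensional (ZMod p) V := Module.finite_of_finrank_pos (by omega)
  have : Nontrivial V := Module.nontrivial_of_finrank_pos (R := ZMod p) (by omega)
  induction M using Finset.strongInduction with
  | H M ih =>
  by_cases hex : ∃ P ∈ M, ∀ f : V →ₗ[ZMod p] ZMod p, f ≠ 0 → ∃ Q ∈ M.erase P, f Q.rep = 0
  · obtain ⟨P, hP, h⟩ := hex
    have hc := Finset.card_erase_lt_of_mem hP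
    obtain ⟨f, hf, h2⟩ := ih (M.erase P) (Finset.erase_ssubset hP) (by omega) (by omega) h
    exact ⟨f, hf, fun Q hQ => Finset.mem_of_mem_erase (h2 Q hQ)⟩
  push Not at hex
  obtain ⟨P0, hP0⟩ : ∃ P0, P0 ∈ M := by
    let b := Module.finBasisOfFinrankEq (ZMod p) V hV
    have hb : b.coord 0 ≠ 0 := by
      intro h
      have := congrArg (fun g => g (b 0)) h
      simp at this
    obtain ⟨P, hP, -⟩ := hblock _ hb
    exact ⟨P, hP⟩
  obtain ⟨f, hf, hfQ⟩ := hex P0 hP0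
  have hf0 : f P0.rep = 0 := by
    obtain ⟨Q, hQ, e⟩ := hblock f hf
    by_cases h : Q = P0
    · rwa [← h]
    · exact absurd e (hfQ Q (Finset.mem_erase.2 ⟨h, hQ⟩))
  obtain ⟨b, hb0, hb2⟩ := exists_adapted_basis hV f hf P0.rep P0.rep_nonzero hf0
  have hfb : ∀ x, f x = b.repr x 0 := fun x => by rw [← hb0]; rfl
  let U : Finset (ZMod p × ZMod p) := (M.erase P0).image
    (fun P => (b.repr P.rep 1 / f P.rep, b.repr P.rep 2 / f P.rep))
  have hUc : U.card + 1 ≤ M.card := by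
    have h1 : U.card ≤ _ := Finset.card_image_le
    have h2 := Finset.card_erase_lt_of_mem hP0
    omega
  obtain ⟨a, ha⟩ := affine_blocking U (by omega) (by omega) (by
    intro x y
    have hg : (b.coord 2 - y • b.coord 1 - x • f) ≠ 0 := by
      intro h
      have := congrArg (fun g => g (b 2)) h
      simp [hfb] at this
    obtain ⟨Q, hQ, e⟩ := hblock _ hg
    simp at e
    have hne : Q ≠ P0 := by
      rintro rfl
      rw [← hb2] at e
      simp [hfb] at e
    have hQ' := Finset.mem_erase.2 ⟨hne, hQ⟩
    have hfq := hfQ Q hQ'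
    refine ⟨_, Finset.mem_image_of_mem _ hQ', ?_⟩
    simp only
    field_simp
    linear_combination e)
  refine ⟨b.coord 1 - a • f, ?_, ?_⟩
  · intro h
    have := congrArg (fun g => g (b 1)) h
    simp [hfb] at this
  · intro Q hQ
    simp at hQ
    by_cases hfq : f Q.rep = 0
    · have : Q = P0 := by
        rw [← Q.mk_rep, ← P0.mk_rep, Projectivization.mk_eq_mk_iff']
        refine ⟨b.repr Q.rep 2, ?_⟩
        rw [← hb2]
        apply b.ext_elem
        intro i
        rw [hfq] at hQ
        rw [hfb] at hfq
        simp at hQ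
        fin_cases i <;> simp [hfq, hQ]
      rwa [this]
    · obtain ⟨P, hP, e⟩ := Finset.mem_image.1 (ha (b.repr Q.rep 2 / f Q.rep))
      have hfp := hfQ P hP
      simp only [Prod.mk.injEq] at e
      obtain ⟨e1, e2⟩ := e
      have : Q = P := by
        rw [← Q.mk_rep, ← P.mk_rep, Projectivization.mk_eq_mk_iff']
        refine ⟨f Q.rep / f P.rep, ?_⟩
        apply b.ext_elem
        intro i
        rw [map_smul, Finsupp.smul_apply, smul_eq_mul]
        rw [div_eq_iff hfp] at e1
        rw [div_eq_div_iff hfp hfq] at e2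
        have e0 := hfb P.rep
        have e0' := hfb Q.rep
        rw [div_mul_eq_mul_div, div_eq_iff hfp]
        fin_cases i
        · simp only [Fin.zero_eta]; rw [← e0, ← e0']
        · simp only [Fin.mk_one]
          linear_combination f Q.rep * e1 - f P.rep * hQ
        · simp only [Fin.reduceFinMk]
          linear_combination e2
      rw [this]
      exact Finset.mem_of_mem_erase hP

/-- The points of a projective line. -/
noncomputable def lineSet {K V : Type*} [Field K] [AddCommGroup V] [Module K V] [Fintype (ℙ K V)]
    (f : V →ₗ[K] K) : Finset (ℙ K V) := by
  classical exact Finset.univ.filter (fun P => f P.rep = 0)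

lemma mem_lineSet {K V : Type*} [Field K] [AddCommGroup V] [Module K V] [Fintype (ℙ K V)]
    (f : V →ₗ[K] K) (P : ℙ K V) : P ∈ lineSet f ↔ f P.rep = 0 := by
  simp [lineSet]

lemma mk_mem_lineSet {K V : Type*} [Field K] [AddCommGroup V] [Module K V] [Fintype (ℙ K V)]
    (f : V →ₗ[K] K) (v : V) (hv : v ≠ 0) : Projectivization.mk K v hv ∈ lineSet f ↔ f v = 0 := by
  rw [mem_lineSet]
  obtain ⟨a, ha⟩ := Projectivization.exists_smul_eq_mk_rep K v hv
  rw [← ha, Units.smul_def, map_smul, smul_eq_mul, mul_eq_zero]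
  simp

lemma card_lineSet {K V : Type*} [Field K] [Finite K] [AddCommGroup V] [Module K V]
    [Fintype (ℙ K V)] (hV : Module.finrank K V = 3) (f : V →ₗ[K] K) (hf : f ≠ 0) :
    (lineSet f).card ≤ Nat.card K + 1 := by
  classical
  have : FiniteDimensional K V := Module.finite_of_finrank_pos (by omega)
  have : Finite V := Module.finite_of_finite K
  have hr : LinearMap.range f = ⊤ := LinearMap.range_eq_top.2 (LinearMap.surjective hf)
  have hk : Module.finrank K (LinearMap.ker f) = 2 := by
    have h2 := LinearMap.finrank_range_add_finrank_ker f
    rw [hr, finrank_top, Module.finrank_self] at h2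
    omega
  have hc := Projectivization.card_of_finrank_two K (LinearMap.ker f) hk
  rw [← hc]
  have : Fintype (ℙ K (LinearMap.ker f)) := Fintype.ofFinite _
  rw [Nat.card_eq_fintype_card]
  let φ : ℙ K (LinearMap.ker f) → ℙ K V :=
    Projectivization.map (LinearMap.ker f).subtype (Submodule.injective_subtype _)
  have hsub : lineSet f ⊆ Finset.univ.image φ := by
    intro P hP
    rw [mem_lineSet] at hP
    refine Finset.mem_image.2 ⟨Projectivization.mk K ⟨P.rep, hP⟩ ?_, Finset.mem_univ _, ?_⟩
    · intro h; exact P.rep_nonzero (congrArg Subtype.val h)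
    · simp only [φ, Projectivization.map_mk]
      exact P.mk_rep
  exact (Finset.card_le_card hsub).trans Finset.card_image_le

lemma lineSet_inter {K V : Type*} [Field K] [AddCommGroup V] [Module K V]
    [Fintype (ℙ K V)] (hV : Module.finrank K V = 3) (f g : V →ₗ[K] K) :
    ∃ P, P ∈ lineSet f ∧ P ∈ lineSet g := by
  have : FiniteDimensional K V := Module.finite_of_finrank_pos (by omega)
  have hne : LinearMap.ker (f.prod g) ≠ ⊥ := by
    apply LinearMap.ker_ne_bot_of_finrank_lt
    simp [hV]
  obtain ⟨v, hv, hv0⟩ := Submodule.exists_mem_ne_zero_of_ne_bot hne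
  simp at hv
  exact ⟨Projectivization.mk K v hv0, (mk_mem_lineSet f v hv0).2 hv.1,
    (mk_mem_lineSet g v hv0).2 hv.2⟩

lemma proj_transitive {K V : Type*} [Field K] [AddCommGroup V] [Module K V]
    [Fintype (ℙ K V)] (P Q : ℙ K V) :
    ∃ σ : Equiv.Perm (ℙ K V), σ P = Q ∧ ∀ f : V →ₗ[K] K, f ≠ 0 →
      ∃ g : V →ₗ[K] K, g ≠ 0 ∧ ∀ R, R ∈ lineSet f ↔ σ R ∈ lineSet g := by
  have : MulAction.IsPretransitive (V ≃ₗ[K] V) (ℙ K V) :=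
    MulAction.isPretransitive_of_is_two_pretransitive
  obtain ⟨e, he⟩ := MulAction.exists_smul_eq (V ≃ₗ[K] V) P Q
  refine ⟨MulAction.toPerm e, he, ?_⟩
  intro f hf
  refine ⟨f.comp (e.symm : V →ₗ[K] V), ?_, ?_⟩
  · intro h; apply hf; ext x
    have := congrArg (fun g => g (e x)) h
    simpa using this
  · intro R
    induction R using Projectivization.ind with
    | h v hv =>
    rw [MulAction.toPerm_apply, Projectivization.smul_mk, mk_mem_lineSet, mk_mem_lineSet]
    simp

end Proj

section Family

lemma fiber_family {Pt : Type*} [Fintype Pt] [DecidableEq Pt] (L : Set (Finset Pt))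
    (q t k s r : ℕ) (ht : k + 1 = 2 * t) (hr : r = t * q + s)
    (hinter : ∀ l ∈ L, ∀ l' ∈ L, ∃ P, P ∈ l ∧ P ∈ l') (hcard : ∀ l ∈ L, l.card ≤ q)
    (htrans : ∀ P Q : Pt, ∃ σ : Equiv.Perm Pt, σ P = Q ∧
      ∀ l ∈ L, ∃ l' ∈ L, ∀ R, R ∈ l ↔ σ R ∈ l')
    (hblock : ∀ M : Finset Pt, t * M.card ≤ r → (∀ l ∈ L, ∃ P ∈ M, P ∈ l) → ∃ l ∈ L, l ⊆ M)
    (h2r : 2 * r ≤ Fintype.card Pt * k) :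
    ∃ F : Finset (Finset (Pt × Fin k)), (∀ A ∈ F, A.card = r) ∧
      (∀ A ∈ F, ∀ B ∈ F, (A ∩ B).Nonempty) ∧
      (∀ G : Finset (Pt × Fin k), G.card = r → G ∉ F → ∃ A ∈ F, A ∩ G = ∅) ∧
      ∀ x y, (F.filter (fun A => x ∈ A)).card ≤ (F.filter (fun A => y ∈ A)).card := by
  classical
  let fib : Finset (Pt × Fin k) → Pt → Finset (Fin k) := fun A P =>
    Finset.univ.filter (fun i => (P, i) ∈ A)
  have hfib : ∀ A P i, i ∈ fib A P ↔ (P, i) ∈ A := fun A P i => by simp [fib]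
  let F : Finset (Finset (Pt × Fin k)) := Finset.univ.filter
    (fun A => A.card = r ∧ ∃ l ∈ L, ∀ P ∈ l, t ≤ (fib A P).card)
  have hF : ∀ A, A ∈ F ↔ A.card = r ∧ ∃ l ∈ L, ∀ P ∈ l, t ≤ (fib A P).card :=
    fun A => by simp [F]
  refine ⟨F, fun A hA => ((hF A).1 hA).1, ?_, ?_, ?_⟩
  · intro A hA B hB
    obtain ⟨-, l, hl, h1⟩ := (hF A).1 hA
    obtain ⟨-, l', hl', h2⟩ := (hF B).1 hB
    obtain ⟨P, hP, hP'⟩ := hinter l hl l' hl'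
    have a1 := h1 P hP
    have a2 := h2 P hP'
    have hne : (fib A P ∩ fib B P).Nonempty := by
      apply Finset.inter_nonempty_of_card_lt_card_add_card (s := Finset.univ)
        (Finset.subset_univ _) (Finset.subset_univ _)
      rw [Finset.card_univ, Fintype.card_fin]; omega
    obtain ⟨i, hi⟩ := hne
    rw [Finset.mem_inter, hfib, hfib] at hi
    exact ⟨(P, i), Finset.mem_inter.2 hi⟩
  · intro G hG hGF
    let M : Finset Pt := Finset.univ.filter (fun P => t ≤ (fib G P).card)
    have hGc : G.card = ∑ P, (fib G P).card := by
      have : G = ((Finset.univ : Finset Pt).sigma (fib G)).map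
          (Equiv.sigmaEquivProd Pt (Fin k)).toEmbedding := by
        ext ⟨P, i⟩
        simp [fib]
      conv_lhs => rw [this]
      rw [Finset.card_map, Finset.card_sigma]
    have hMc : t * M.card ≤ r := by
      rw [← hG, hGc, mul_comm, ← smul_eq_mul]
      calc M.card • t ≤ ∑ P ∈ M, (fib G P).card :=
            Finset.card_nsmul_le_sum _ _ _ (fun P hP => (Finset.mem_filter.1 hP).2)
        _ ≤ _ := Finset.sum_le_sum_of_subset (Finset.subset_univ _)
    have hnl : ¬ ∃ l ∈ L, l ⊆ M := by
      rintro ⟨l, hl, hlM⟩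
      exact hGF ((hF G).2 ⟨hG, l, hl, fun P hP => (Finset.mem_filter.1 (hlM hP)).2⟩)
    have := mt (hblock M hMc) hnl
    push Not at this
    obtain ⟨l, hl, hlM⟩ := this
    have hT : ∀ P, ∃ T : Finset (Fin k), P ∈ l → T ⊆ (fib G P)ᶜ ∧ T.card = t := by
      intro P
      by_cases hP : P ∈ l
      · have h1 : ¬ t ≤ (fib G P).card := fun h =>
          hlM P (Finset.mem_filter.2 ⟨Finset.mem_univ _, h⟩) hP
        have h2 : t ≤ ((fib G P)ᶜ).card := by
          rw [Finset.card_compl, Fintype.card_fin]; omega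
        obtain ⟨T, hT, hTc⟩ := Finset.exists_subset_card_eq h2
        exact ⟨T, fun _ => ⟨hT, hTc⟩⟩
      · exact ⟨∅, fun h => absurd h hP⟩
    choose T hT using hT
    let S : Finset (Pt × Fin k) := (l.sigma T).map (Equiv.sigmaEquivProd Pt (Fin k)).toEmbedding
    have hS : ∀ P i, (P, i) ∈ S ↔ P ∈ l ∧ i ∈ T P := by
      intro P i; simp [S]
    have hSc : S.card ≤ r := by
      rw [Finset.card_map, Finset.card_sigma, Finset.sum_congr rfl (fun P hP => (hT P hP).2),
        Finset.sum_const, smul_eq_mul, hr]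
      have := Nat.mul_le_mul_right t (hcard l hl)
      rw [mul_comm q t] at this
      omega
    have hSG : S ⊆ Gᶜ := by
      rintro ⟨P, i⟩ h
      rw [hS] at h
      have := (hT P h.1).1 h.2
      rw [Finset.mem_compl, hfib] at this
      exact Finset.mem_compl.2 this
    have hGr : r ≤ (Gᶜ).card := by
      rw [Finset.card_compl, Fintype.card_prod, Fintype.card_fin]; omega
    obtain ⟨A, hSA, hAG, hA⟩ := Finset.exists_subsuperset_card_eq hSG hSc hGr
    refine ⟨A, (hF A).2 ⟨hA, l, hl, ?_⟩, ?_⟩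
    · intro P hP
      rw [← (hT P hP).2]
      apply Finset.card_le_card
      intro i hi
      rw [hfib]
      exact hSA ((hS P i).2 ⟨hP, hi⟩)
    · rw [← Finset.disjoint_iff_inter_eq_empty]
      exact Finset.disjoint_left.2 fun x hx => Finset.mem_compl.1 (hAG hx)
  · rintro ⟨P, i⟩ ⟨Q, j⟩
    obtain ⟨σ, hσ, hL⟩ := htrans P Q
    let τ : Equiv.Perm (Pt × Fin k) := Equiv.prodCongr σ (Equiv.swap i j)
    apply Finset.card_le_card_of_injOn (fun A => A.map τ.toEmbedding)
    · intro A hA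
      rw [Finset.mem_coe, Finset.mem_filter, hF] at hA
      obtain ⟨⟨hA, l, hl, h⟩, hx⟩ := hA
      rw [Finset.mem_coe, Finset.mem_filter, hF]
      refine ⟨⟨by rw [Finset.card_map, hA], ?_⟩, ?_⟩
      · obtain ⟨l', hl', hll⟩ := hL l hl
        refine ⟨l', hl', ?_⟩
        intro R hR
        obtain ⟨R, rfl⟩ := σ.surjective R
        refine (h R ((hll R).2 hR)).trans ?_
        apply Finset.card_le_card_of_injOn (Equiv.swap i j)
        · intro x hx
          rw [Finset.mem_coe, hfib] at hx
          rw [Finset.mem_coe, hfib]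
          exact Finset.mem_map.2 ⟨(R, x), hx, rfl⟩
        · exact (Equiv.injective _).injOn
      · refine Finset.mem_map.2 ⟨(P, i), hx, ?_⟩
        simp [τ, hσ]
    · exact (Finset.map_injective _).injOn

lemma transfer {α : Type*} [Fintype α] [DecidableEq α] (n r : ℕ) (hn : Fintype.card α = n)
    (hr0 : 0 < r) (hrn : r ≤ n)
    (F : Finset (Finset α)) (h1 : ∀ A ∈ F, A.card = r)
    (h2 : ∀ A ∈ F, ∀ B ∈ F, (A ∩ B).Nonempty)
    (h3 : ∀ G : Finset α, G.card = r → G ∉ F → ∃ A ∈ F, A ∩ G = ∅)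
    (h4 : ∀ x y, (F.filter (fun A => x ∈ A)).card ≤ (F.filter (fun A => y ∈ A)).card) :
    ∃ F : Finset (Finset ℕ), IsFamily n r F ∧ IsMaxIntersecting n r F ∧ Covers n F ∧
      ∀ x ∈ Finset.Icc 1 n, ∀ y ∈ Finset.Icc 1 n, degree F x = degree F y := by
  classical
  let e : α ≃ Fin n := Fintype.equivFinOfCardEq hn
  let ι : α ↪ ℕ := ⟨fun x => (e x : ℕ) + 1, fun x y h => e.injective (Fin.ext (by simpa using h))⟩
  have hιe : ∀ x, ι x = (e x : ℕ) + 1 := fun _ => rfl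
  have hι : ∀ x, ι x ∈ Finset.Icc 1 n := by
    intro x
    have := (e x).2
    rw [Finset.mem_Icc, hιe]
    omega
  have hsurj : ∀ m ∈ Finset.Icc 1 n, ∃ x, ι x = m := by
    intro m hm
    rw [Finset.mem_Icc] at hm
    refine ⟨e.symm ⟨m - 1, by omega⟩, ?_⟩
    rw [hιe, Equiv.apply_symm_apply]
    simp only
    omega
  let F' : Finset (Finset ℕ) := F.map (Finset.mapEmbedding ι).toEmbedding
  have hF' : ∀ B, B ∈ F' ↔ ∃ A ∈ F, A.map ι = B := by
    intro B; simp [F', Finset.mapEmbedding_apply]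
  have hdeg : ∀ x, degree F' (ι x) = (F.filter (fun A => x ∈ A)).card := by
    intro x
    rw [degree, Finset.filter_map, Finset.card_map]
    congr 1
    apply Finset.filter_congr
    intro A _
    simp [Finset.mapEmbedding_apply]
  obtain ⟨A0, hA0⟩ : F.Nonempty := by
    obtain ⟨G, -, hG⟩ := Finset.exists_subset_card_eq (s := (Finset.univ : Finset α)) (n := r)
      (by rw [Finset.card_univ, hn]; exact hrn)
    by_contra hne
    rw [Finset.not_nonempty_iff_eq_empty] at hne
    obtain ⟨A, hA, -⟩ := h3 G hG (by simp [hne])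
    simp [hne] at hA
  obtain ⟨x0, hx0⟩ : A0.Nonempty := Finset.card_pos.1 (by rw [h1 A0 hA0]; exact hr0)
  refine ⟨F', ?_, ⟨?_, ?_⟩, ?_, ?_⟩
  · intro B hB
    obtain ⟨A, hA, rfl⟩ := (hF' B).1 hB
    refine ⟨?_, by rw [Finset.card_map, h1 A hA]⟩
    intro y hy
    obtain ⟨x, -, rfl⟩ := Finset.mem_map.1 hy
    exact hι x
  · intro B hB B' hB'
    obtain ⟨A, hA, rfl⟩ := (hF' B).1 hB
    obtain ⟨A', hA', rfl⟩ := (hF' B').1 hB'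
    rw [← Finset.map_inter]
    exact (h2 A hA A' hA').map
  · intro G hG hGr hGF
    let G0 : Finset α := Finset.univ.filter (fun x => ι x ∈ G)
    have hG0 : G0.map ι = G := by
      ext m
      simp only [Finset.mem_map, G0, Finset.mem_filter, Finset.mem_univ, true_and]
      constructor
      · rintro ⟨x, hx, rfl⟩; exact hx
      · intro hm
        obtain ⟨x, rfl⟩ := hsurj m (hG hm)
        exact ⟨x, hm, rfl⟩
    obtain ⟨A, hA, hAG⟩ := h3 G0 (by rw [← Finset.card_map ι, hG0, hGr])
      (fun h => hGF ((hF' G).2 ⟨G0, h, hG0⟩))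
    refine ⟨A.map ι, (hF' _).2 ⟨A, hA, rfl⟩, ?_⟩
    rw [← hG0, ← Finset.map_inter, hAG, Finset.map_empty]
  · intro m hm
    obtain ⟨y, rfl⟩ := hsurj m hm
    have hpos : 0 < (F.filter (fun A => x0 ∈ A)).card :=
      Finset.card_pos.2 ⟨A0, Finset.mem_filter.2 ⟨hA0, hx0⟩⟩
    obtain ⟨A, hA⟩ := Finset.card_pos.1 (hpos.trans_le (h4 x0 y))
    rw [Finset.mem_filter] at hA
    exact ⟨A.map ι, (hF' _).2 ⟨A, hA.1, rfl⟩, Finset.mem_map_of_mem _ hA.2⟩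
  · intro a ha b hb
    obtain ⟨x, rfl⟩ := hsurj a ha
    obtain ⟨y, rfl⟩ := hsurj b hb
    rw [hdeg, hdeg]
    exact le_antisymm (h4 x y) (h4 y x)

lemma small_case : ∃ F : Finset (Finset (Fin 7)), (∀ A ∈ F, A.card = 4) ∧
      (∀ A ∈ F, ∀ B ∈ F, (A ∩ B).Nonempty) ∧
      (∀ G : Finset (Fin 7), G.card = 4 → G ∉ F → ∃ A ∈ F, A ∩ G = ∅) ∧
      ∀ x y, (F.filter (fun A => x ∈ A)).card ≤ (F.filter (fun A => y ∈ A)).card := by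
  refine ⟨Finset.univ.powersetCard 4, ?_, ?_, ?_, ?_⟩
  · intro A hA; exact (Finset.mem_powersetCard.1 hA).2
  · intro A hA B hB
    apply Finset.inter_nonempty_of_card_lt_card_add_card (s := Finset.univ)
      (Finset.subset_univ _) (Finset.subset_univ _)
    rw [(Finset.mem_powersetCard.1 hA).2, (Finset.mem_powersetCard.1 hB).2]
    simp
  · intro G hG hGF
    exact absurd (Finset.mem_powersetCard.2 ⟨Finset.subset_univ _, hG⟩) hGF
  · intro x y
    apply Finset.card_le_card_of_injOn (fun A => A.map (Equiv.swap x y).toEmbedding)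
    · intro A hA
      simp only [Finset.coe_filter, Finset.mem_powersetCard, Set.mem_ofPred_eq] at hA ⊢
      refine ⟨⟨Finset.subset_univ _, by rw [Finset.card_map, hA.1.2]⟩, ?_⟩
      exact Finset.mem_map.2 ⟨x, hA.2, by simp⟩
    · exact (Finset.map_injective _).injOn

end Family

/-- For odd `k`, prime `p` and `0 ≤ 2s ≤ p`, with `n = k(p²+p+1)` and
`r = ((k+1)/2)(p+1) + s`, there exists a regular maximal intersecting family of
`r`-subsets of `[n]` covering `[n]`; in particular `Δ(F) = δ(F)` and `m(n, r) = 1`. -/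
theorem exists_regular_maximal_family (k p s : ℕ) (hk : Odd k) (hk0 : 0 < k)
    (hp : p.Prime) (hs : 2 * s ≤ p) :
    ∃ F : Finset (Finset ℕ),
      IsFamily (k * (p ^ 2 + p + 1)) ((k + 1) / 2 * (p + 1) + s) F ∧
      IsMaxIntersecting (k * (p ^ 2 + p + 1)) ((k + 1) / 2 * (p + 1) + s) F ∧
      Covers (k * (p ^ 2 + p + 1)) F ∧
      ∀ x ∈ Finset.Icc 1 (k * (p ^ 2 + p + 1)), ∀ y ∈ Finset.Icc 1 (k * (p ^ 2 + p + 1)),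
        degree F x = degree F y := by
  classical
  by_cases hsm : p = 2 ∧ k = 1 ∧ s = 1
  · obtain ⟨rfl, rfl, rfl⟩ := hsm
    obtain ⟨F, h1, h2, h3, h4⟩ := small_case
    exact transfer 7 4 (by simp) (by norm_num) (by norm_num) F h1 h2 h3 h4
  have : Fact p.Prime := ⟨hp⟩
  have hp2 := hp.two_le
  obtain ⟨j, hj⟩ := hk
  obtain ⟨t, ht⟩ : ∃ t, t = (k + 1) / 2 := ⟨_, rfl⟩
  have hkt : k + 1 = 2 * t := by omega
  rw [← ht]
  have hV : Module.finrank (ZMod p) (Fin 3 → ZMod p) = 3 := by simp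
  let Pt := Projectivization (ZMod p) (Fin 3 → ZMod p)
  have : Fintype Pt := Fintype.ofFinite _
  have hPt : Fintype.card Pt = p ^ 2 + p + 1 := by
    rw [← Nat.card_eq_fintype_card, Projectivization.card_of_finrank _ _ hV]
    simp [Finset.sum_range_succ]
    ring
  have h2r : 2 * (t * (p + 1) + s) ≤ (p ^ 2 + p + 1) * k := by
    have e : 2 * (t * (p + 1) + s) = (k + 1) * (p + 1) + 2 * s := by rw [hkt]; ring
    rw [e]
    rcases Nat.eq_zero_or_pos j with hj0 | hj0
    · have hk1 : k = 1 := by omega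
      subst hk1
      rcases Nat.lt_or_ge 2 p with h | h
      · nlinarith
      · have : p = 2 := by omega
        subst this
        have : s = 0 := by omega
        subst this
        norm_num
    · have : 3 ≤ k := by omega
      nlinarith [Nat.mul_le_mul this (Nat.mul_le_mul hp2 (le_refl p))]
  let L : Set (Finset Pt) := {l | ∃ f : (Fin 3 → ZMod p) →ₗ[ZMod p] ZMod p, f ≠ 0 ∧ l = lineSet f}
  obtain ⟨F, h1, h2, h3, h4⟩ := fiber_family (Pt := Pt) L (p + 1) t k s (t * (p + 1) + s) hkt rfl
    (by
      rintro _ ⟨f, hf, rfl⟩ _ ⟨g, hg, rfl⟩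
      exact lineSet_inter hV f g)
    (by
      rintro _ ⟨f, hf, rfl⟩
      have := card_lineSet hV f hf
      rwa [Nat.card_zmod] at this)
    (by
      intro P Q
      obtain ⟨σ, hσ, h⟩ := proj_transitive P Q
      refine ⟨σ, hσ, ?_⟩
      rintro _ ⟨f, hf, rfl⟩
      obtain ⟨g, hg, hfg⟩ := h f hf
      exact ⟨_, ⟨g, hg, rfl⟩, hfg⟩)
    (by
      intro M hM hb
      have hMs : M.card ≤ p + 1 + s ∧ (t ≠ 1 → s = 1 → M.card ≤ p + 1) := by
        constructor
        · by_contra hlt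
          have h1 : p + 1 + s + 1 ≤ M.card := by omega
          have h2 := Nat.mul_le_mul_left t h1
          have : 1 ≤ t := by omega
          nlinarith
        · intro h1 hs1
          by_contra hlt
          have h1 : p + 2 ≤ M.card := by omega
          have h2 := Nat.mul_le_mul_left t h1
          have : 2 ≤ t := by omega
          nlinarith
      have hodd : 2 * s = p → p = 2 ∧ s = 1 := by
        intro h
        have : p = 2 := ((Nat.prime_dvd_prime_iff_eq Nat.prime_two hp).1 ⟨s, h.symm⟩).symm
        omega
      obtain ⟨f, hf, h⟩ := projective_blocking hV M (by
          by_cases h : 2 * s = p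
          · obtain ⟨a, b⟩ := hodd h
            have := hMs.2 (by omega) b
            omega
          · omega)
        (by
          by_cases h : 2 * s = p
          · obtain ⟨a, b⟩ := hodd h
            have := hMs.2 (by omega) b
            omega
          · omega)
        (by
          intro f hf
          obtain ⟨P, hP, hPl⟩ := hb _ ⟨f, hf, rfl⟩
          exact ⟨P, hP, (mem_lineSet f P).1 hPl⟩)
      exact ⟨_, ⟨f, hf, rfl⟩, fun P hP => h P ((mem_lineSet f P).1 hP)⟩)
    (by rw [hPt]; exact h2r)
  refine transfer _ _ (by rw [Fintype.card_prod, hPt, Fintype.card_fin, mul_comm]) ?_ ?_ F h1 h2 h3 h4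
  · have : 0 < t * (p + 1) := Nat.mul_pos (by omega) (by omega)
    omega
  · rw [mul_comm k]; omega
end

section
/- Let r ≥ 2 and n = 2r, and define F* = {F : F an r-element subset of [2r] with 1 ∉ F and F ≠ {r+1, …, 2r}} ∪ {{1, 2, …, r}}. Then F* is a maximal intersecting family of r-element subsets of [2r] with ∪F* = [2r], the minimum degree of F* equals 1 (attained at the element 1), and the maximum degree of F* equals binom(2r−2, r−1) + 1; hence Δ(F*)/δ(F*) = binom(2r−2, r−1) + 1, which is exponentially large in n. -/
/-- The family `F* = {F ∈ binom([2r], r) : 1 ∉ F, F ≠ {r+1,…,2r}} ∪ {{1,…,r}}`. -/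
def Fstar (r : ℕ) : Finset (Finset ℕ) :=
  (((Finset.Icc 1 (2 * r)).powersetCard r).filter
      (fun A => 1 ∉ A ∧ A ≠ Finset.Icc (r + 1) (2 * r))) ∪ {Finset.Icc 1 r}

theorem mem_Fstar_iff (r : ℕ) (A : Finset ℕ) : A ∈ Fstar r ↔
    ((A ⊆ Finset.Icc 1 (2 * r) ∧ A.card = r) ∧ 1 ∉ A ∧ A ≠ Finset.Icc (r + 1) (2 * r)) ∨
      A = Finset.Icc 1 r := by
  simp [Fstar, or_comm]

theorem card_P (r x : ℕ) (hr : 2 ≤ r) (hx : x ∈ Finset.Icc 2 (2 * r)) :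
    (((Finset.Icc 2 (2 * r)).powersetCard r).filter (fun A => x ∈ A)).card
      = Nat.choose (2 * r - 2) (r - 1) := by
  have h1 := Finset.card_filter_add_card_filter_not (s := (Finset.Icc 2 (2 * r)).powersetCard r)
    (fun A => x ∈ A)
  have h2 : ((Finset.Icc 2 (2 * r)).powersetCard r).filter (fun A => ¬ x ∈ A)
      = ((Finset.Icc 2 (2 * r)).erase x).powersetCard r := by
    ext A
    simp only [Finset.mem_filter, Finset.mem_powersetCard, Finset.subset_erase]
    tauto
  rw [h2, Finset.card_powersetCard, Finset.card_powersetCard, Finset.card_erase_of_mem hx,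
    Nat.card_Icc] at h1
  obtain ⟨k, rfl⟩ : ∃ k, r = k + 1 := ⟨r - 1, by omega⟩
  have e1 : 2 * (k + 1) + 1 - 2 = 2 * k + 1 := by omega
  have e2 : 2 * (k + 1) - 2 = 2 * k := by omega
  rw [e1, Nat.choose_succ_succ] at h1
  rw [e2]
  simp only [Nat.add_sub_cancel, Nat.succ_eq_add_one] at h1 ⊢
  omega

theorem sub2 (r : ℕ) (A : Finset ℕ) :
    A ⊆ Finset.Icc 2 (2 * r) ↔ A ⊆ Finset.Icc 1 (2 * r) ∧ 1 ∉ A := by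
  constructor
  · intro h
    refine ⟨h.trans (Finset.Icc_subset_Icc_left (by omega)), fun h1 => ?_⟩
    have := h h1
    simp at this
  · rintro ⟨h, h1⟩ y hy
    have := h hy
    rw [Finset.mem_Icc] at this ⊢
    have : y ≠ 1 := fun e => h1 (e ▸ hy)
    omega

theorem degree_low (r x : ℕ) (hr : 2 ≤ r) (h2 : 2 ≤ x) (hx : x ≤ r) :
    degree (Fstar r) x = Nat.choose (2 * r - 2) (r - 1) + 1 := by
  rw [← card_P r x hr (by rw [Finset.mem_Icc]; omega), degree]
  have : (Fstar r).filter (fun A => x ∈ A) = insert (Finset.Icc 1 r)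
      (((Finset.Icc 2 (2 * r)).powersetCard r).filter (fun A => x ∈ A)) := by
    ext A
    have a1 : x ∈ Finset.Icc 1 r := by rw [Finset.mem_Icc]; omega
    have a2 : x ∉ Finset.Icc (r + 1) (2 * r) := by rw [Finset.mem_Icc]; omega
    simp only [Finset.mem_filter, Finset.mem_insert, mem_Fstar_iff, Finset.mem_powersetCard, sub2]
    constructor
    · tauto
    · rintro (rfl | h)
      · tauto
      · have : A ≠ Finset.Icc (r + 1) (2 * r) := by
          rintro rfl
          tauto
        tauto
  rw [this, Finset.card_insert_of_notMem]
  simp only [Finset.mem_filter, Finset.mem_powersetCard, sub2, Finset.mem_Icc]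
  intro h
  exact h.1.1.2 (by omega)

theorem degree_high (r x : ℕ) (hr : 2 ≤ r) (h2 : r < x) (hx : x ≤ 2 * r) :
    degree (Fstar r) x = Nat.choose (2 * r - 2) (r - 1) - 1 := by
  rw [← card_P r x hr (by rw [Finset.mem_Icc]; omega), degree]
  have : (Fstar r).filter (fun A => x ∈ A) = 
      (((Finset.Icc 2 (2 * r)).powersetCard r).filter (fun A => x ∈ A)).erase
        (Finset.Icc (r + 1) (2 * r)) := by
    ext A
    have a1 : x ∉ Finset.Icc 1 r := by rw [Finset.mem_Icc]; omega
    simp only [Finset.mem_filter, Finset.mem_erase, mem_Fstar_iff, Finset.mem_powersetCard, sub2]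
    constructor
    · rintro ⟨h | rfl, h'⟩ <;> tauto
    · tauto
  rw [this, Finset.card_erase_of_mem]
  simp only [Finset.mem_filter, Finset.mem_powersetCard, Finset.mem_Icc, Nat.card_Icc]
  exact ⟨⟨Finset.Icc_subset_Icc_left (by omega), by omega⟩, by omega, by omega⟩

theorem degree_one (r : ℕ) (hr : 2 ≤ r) : degree (Fstar r) 1 = 1 := by
  have : (Fstar r).filter (fun A => 1 ∈ A) = {Finset.Icc 1 r} := by
    ext A
    have a1 : 1 ∈ Finset.Icc 1 r := by rw [Finset.mem_Icc]; omega
    simp only [Finset.mem_filter, Finset.mem_singleton, mem_Fstar_iff]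
    constructor
    · tauto
    · rintro rfl
      tauto
  rw [degree, this, Finset.card_singleton]

theorem two_le_ch (r : ℕ) (hr : 2 ≤ r) : 2 ≤ Nat.choose (2 * r - 2) (r - 1) := by
  have h := Nat.choose_le_centralBinom 1 (r - 1)
  rw [Nat.centralBinom, Nat.choose_one_right] at h
  have : 2 * (r - 1) = 2 * r - 2 := by omega
  rw [this] at h
  omega

theorem fam (r : ℕ) : IsFamily (2 * r) r (Fstar r) := by
  intro A hA
  rw [mem_Fstar_iff] at hA
  rcases hA with h | rfl
  · exact h.1
  · exact ⟨Finset.Icc_subset_Icc_right (by omega), by simp⟩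

theorem meet_low (r : ℕ) (A : Finset ℕ) (h : A ⊆ Finset.Icc 1 (2 * r)) (hc : A.card = r)
    (hne : A ≠ Finset.Icc (r + 1) (2 * r)) : (A ∩ Finset.Icc 1 r).Nonempty := by
  by_contra hn
  rw [Finset.not_nonempty_iff_eq_empty, ← Finset.disjoint_iff_inter_eq_empty,
    Finset.disjoint_left] at hn
  apply hne
  apply Finset.eq_of_subset_of_card_le
  · intro y hy
    have h1 := h hy
    have h2 := hn hy
    rw [Finset.mem_Icc] at *
    omega
  · rw [Nat.card_Icc]
    omega

theorem inter (r : ℕ) (hr : 2 ≤ r) : IsIntersecting (Fstar r) := by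
  intro A hA B hB
  rw [mem_Fstar_iff] at hA hB
  rcases hA with ⟨⟨hA, hAc⟩, hA1, hA2⟩ | rfl
  · rcases hB with ⟨⟨hB, hBc⟩, hB1, hB2⟩ | rfl
    · by_contra hn
      rw [Finset.not_nonempty_iff_eq_empty, ← Finset.disjoint_iff_inter_eq_empty] at hn
      have h1 := Finset.card_union_of_disjoint hn
      have h2 := Finset.card_le_card
        (Finset.union_subset ((sub2 r A).2 ⟨hA, hA1⟩) ((sub2 r B).2 ⟨hB, hB1⟩))
      rw [Nat.card_Icc] at h2
      omega
    · exact meet_low r A hA hAc hA2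
  · rcases hB with ⟨⟨hB, hBc⟩, hB1, hB2⟩ | rfl
    · rw [Finset.inter_comm]
      exact meet_low r B hB hBc hB2
    · exact ⟨1, by simp; omega⟩

theorem maxi (r : ℕ) (hr : 2 ≤ r) : IsMaxIntersecting (2 * r) r (Fstar r) := by
  refine ⟨inter r hr, fun G hG hc hn => ?_⟩
  rw [mem_Fstar_iff] at hn
  by_cases h1 : 1 ∈ G
  · refine ⟨Finset.Icc 1 (2 * r) \ G, ?_, Finset.sdiff_inter_self _ _⟩
    rw [mem_Fstar_iff]
    left
    refine ⟨⟨Finset.sdiff_subset, ?_⟩, by simp [h1], fun he => hn (Or.inr ?_)⟩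
    · rw [Finset.card_sdiff_of_subset hG, Nat.card_Icc]
      omega
    · symm
      apply Finset.eq_of_subset_of_card_le
      · intro y hy
        by_contra hy'
        rw [Finset.mem_Icc] at hy
        have : y ∈ Finset.Icc 1 (2 * r) \ G := by
          rw [Finset.mem_sdiff, Finset.mem_Icc]
          exact ⟨by omega, hy'⟩
        rw [he, Finset.mem_Icc] at this
        omega
      · rw [Nat.card_Icc]
        omega
  · have : G = Finset.Icc (r + 1) (2 * r) := by tauto
    refine ⟨Finset.Icc 1 r, (mem_Fstar_iff _ _).2 (Or.inr rfl), ?_⟩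
    subst this
    rw [← Finset.disjoint_iff_inter_eq_empty, Finset.disjoint_left]
    intro y
    rw [Finset.mem_Icc, Finset.mem_Icc]
    omega

theorem degree_bounds (r x : ℕ) (hr : 2 ≤ r) (h1 : 1 ≤ x) (hx : x ≤ 2 * r) :
    1 ≤ degree (Fstar r) x ∧ degree (Fstar r) x ≤ Nat.choose (2 * r - 2) (r - 1) + 1 := by
  have := two_le_ch r hr
  rcases Nat.lt_or_ge r x with h | h
  · rw [degree_high r x hr h hx]
    omega
  · rcases Nat.lt_or_ge x 2 with h' | h'
    · obtain rfl : x = 1 := by omega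
      rw [degree_one r hr]
      omega
    · rw [degree_low r x hr h' h]
      omega

/-- For `r ≥ 2`, `F*` is a maximal intersecting family of `r`-subsets of
`[2r]` with `∪F* = [2r]`, minimum degree `1` (attained at the element `1`) and maximum
degree `C(2r−2, r−1) + 1`; hence `Δ(F*)/δ(F*) = C(2r−2, r−1) + 1`. -/
theorem Fstar_properties (r : ℕ) (hr : 2 ≤ r) :
    IsFamily (2 * r) r (Fstar r) ∧ IsMaxIntersecting (2 * r) r (Fstar r) ∧
    Covers (2 * r) (Fstar r) ∧
    degree (Fstar r) 1 = 1 ∧ minDeg (2 * r) (Fstar r) = 1 ∧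
    maxDeg (2 * r) (Fstar r) = Nat.choose (2 * r - 2) (r - 1) + 1 := by
  refine ⟨fam r, maxi r hr, ?_, degree_one r hr, ?_, ?_⟩
  · intro x hx
    rw [Finset.mem_Icc] at hx
    have h := (degree_bounds r x hr hx.1 hx.2).1
    rw [degree] at h
    obtain ⟨A, hA⟩ := Finset.card_pos.1 h
    exact ⟨A, (Finset.mem_filter.1 hA).1, (Finset.mem_filter.1 hA).2⟩
  · apply IsLeast.csInf_eq
    refine ⟨⟨1, ⟨le_refl _, by omega⟩, degree_one r hr⟩, ?_⟩
    rintro _ ⟨x, hx, rfl⟩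
    exact (degree_bounds r x hr hx.1 hx.2).1
  · apply IsGreatest.csSup_eq
    refine ⟨⟨2, ⟨by omega, by omega⟩, degree_low r 2 hr (le_refl _) hr⟩, ?_⟩
    rintro _ ⟨x, hx, rfl⟩
    exact (degree_bounds r x hr hx.1 hx.2).2
end
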